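/- Let L be a commutative integral residuated lattice with least element 0 that is involutive: (b ⇨ 0) ⇨ 0 = b for all b ∈ L. For a, b ∈ L write a ⊕ b = (a ⇨ 0) ⇨ b. Then the assignments F ↦ K(L,F) = {(a,b) : a ⊕ b ∈ F} and S ↦ F_S = {a ⊕ b : (a,b) ∈ S} are mutually inverse bijections between the lattice filters of L and the admissible subuniverses of K(L): for every lattice filter F one has F_{K(L,F)} = F, and for every admissible subuniverse S of K(L) the set F_S is a lattice filter of L with K(L, F_S) = S. -/

import Mathlib

/-- A commutative integral residuated lattice. -/
class CIRL (L : Type*) extends Lattice L, CommMonoid L where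
  imp : L → L → L
  resid : ∀ a b c : L, a * b ≤ c ↔ a ≤ imp b c
  le_one : ∀ a : L, a ≤ (1 : L)

namespace CIRL

variable {L : Type*} [CIRL L]

/-- Join in `K(L)`. -/
def kjoin (X Y : L × L) : L × L := (X.1 ⊔ Y.1, X.2 ⊓ Y.2)

/-- Meet in `K(L)`. -/
def kmeet (X Y : L × L) : L × L := (X.1 ⊓ Y.1, X.2 ⊔ Y.2)

/-- Product in `K(L)`. -/
def kmul (X Y : L × L) : L × L := (X.1 * Y.1, imp X.1 Y.2 ⊓ imp Y.1 X.2)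

/-- Implication in `K(L)`. -/
def kimp (X Y : L × L) : L × L := (imp X.1 Y.1 ⊓ imp Y.2 X.2, X.1 * Y.2)

/-- The unit of `K(L)`. -/
def kone : L × L := ((1 : L), (1 : L))

end CIRL

open CIRL

/-- A lattice filter: a nonempty, upward-closed subset closed under binary meet. -/
def IsLatticeFilter {L : Type*} [Lattice L] (F : Set L) : Prop :=
  F.Nonempty ∧ (∀ a b : L, a ∈ F → a ≤ b → b ∈ F) ∧
    (∀ a b : L, a ∈ F → b ∈ F → a ⊓ b ∈ F)

/-- A subuniverse of `K(L)`: contains the unit and is closed under the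
K-expansion operations. -/
def IsSubuniverse {L : Type*} [CIRL L] (S : Set (L × L)) : Prop :=
  kone ∈ S ∧ ∀ X Y : L × L, X ∈ S → Y ∈ S →
    kjoin X Y ∈ S ∧ kmeet X Y ∈ S ∧ kmul X Y ∈ S ∧ kimp X Y ∈ S

/-- An admissible subuniverse of `K(L)`: a subuniverse containing `(a,1)` for
every `a ∈ L`. -/
def IsAdmissible {L : Type*} [CIRL L] (S : Set (L × L)) : Prop :=
  IsSubuniverse S ∧ ∀ a : L, (a, (1 : L)) ∈ S

/-!
The swap `~(a, b) = (b, a)` satisfies `~X = X ⇒ 1` in `K(L)`, so every subuniverse is closed under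
it. Moreover `X ∧ Y = ~(~X ∨ ~Y)` and `X ⇒ Y = ~(X · ~Y)`. The set `K(L, F)` is therefore a
subuniverse as soon as it is closed under swap, join and product: closure under swap is
commutativity of `⊕`, and for join and product the value of `⊕` at the result dominates the meet
of the values at the arguments.

Conversely, an admissible `S` is upward closed in its first coordinate, and multiplying by
`(¬a, 1)` and swapping moves between `(a, b)` and `(a ⊕ b, 0)`. So `S` is determined by the set
of those `c` with `(c, 0) ∈ S`, which is `F_S`.
-/

namespace CIRL

variable {L : Type*} [CIRL L] {z a b c d : L} {S : Set (L × L)}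

local infixr:60 " ⇒ " => CIRL.imp

theorem le_imp_iff : a ≤ b ⇒ c ↔ a * b ≤ c :=
  (resid a b c).symm

theorem imp_mul_le : (a ⇒ b) * a ≤ b :=
  le_imp_iff.mp le_rfl

instance : IsOrderedMonoid L where
  mul_le_mul_left _ _ hab _ := le_imp_iff.mp (hab.trans (le_imp_iff.mpr le_rfl))

theorem mul_le_left : a * b ≤ a :=
  mul_le_of_le_one_right' (le_one b)

theorem imp_le_imp_right (c : L) (hab : a ≤ b) : b ⇒ c ≤ a ⇒ c :=
  le_imp_iff.mpr ((mul_le_mul_right hab _).trans imp_mul_le)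

theorem mul_imp : a * b ⇒ c = a ⇒ b ⇒ c :=
  eq_of_forall_le_iff fun _ => by simp only [le_imp_iff, mul_assoc]

theorem imp_inf : a ⇒ b ⊓ c = (a ⇒ b) ⊓ (a ⇒ c) :=
  eq_of_forall_le_iff fun _ => by simp only [le_imp_iff, le_inf_iff]

theorem imp_one : a ⇒ 1 = 1 :=
  le_antisymm (le_one _) (le_imp_iff.mpr (le_one _))

theorem one_imp : 1 ⇒ a = a :=
  eq_of_forall_le_iff fun _ => by rw [le_imp_iff, mul_one]

/-- The operation `a ⊕ b = ¬a ⇒ b`, where `¬a = a ⇒ z` is the negation with respect to an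
arbitrary element `z`. -/
def oplus (z a b : L) : L := (a ⇒ z) ⇒ b

theorem oplus_one : oplus z a 1 = 1 :=
  imp_one

theorem oplus_inf : oplus z a (b ⊓ c) = oplus z a b ⊓ oplus z a c :=
  imp_inf

theorem oplus_mono_left (hab : a ≤ b) : oplus z a c ≤ oplus z b c :=
  imp_le_imp_right c (imp_le_imp_right z hab)

theorem oplus_le_oplus_mul_imp : oplus z c d ≤ oplus z (a * c) (a ⇒ d) := by
  have neg_mul_le : (a * c ⇒ z) * a ≤ c ⇒ z := by
    rw [mul_imp]
    exact imp_mul_le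
  calc oplus z c d ≤ (a * c ⇒ z) * a ⇒ d := imp_le_imp_right d neg_mul_le
    _ = oplus z (a * c) (a ⇒ d) := mul_imp

theorem inf_oplus_le_oplus_kjoin (X Y : L × L) :
    oplus z X.1 X.2 ⊓ oplus z Y.1 Y.2 ≤ oplus z (kjoin X Y).1 (kjoin X Y).2 := by
  simp only [kjoin, oplus_inf]
  exact inf_le_inf (oplus_mono_left le_sup_left) (oplus_mono_left le_sup_right)

theorem inf_oplus_le_oplus_kmul (X Y : L × L) :
    oplus z X.1 X.2 ⊓ oplus z Y.1 Y.2 ≤ oplus z (kmul X Y).1 (kmul X Y).2 := by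
  simp only [kmul, oplus_inf]
  refine le_inf (inf_le_right.trans oplus_le_oplus_mul_imp) (inf_le_left.trans ?_)
  rw [mul_comm]
  exact oplus_le_oplus_mul_imp

/-- A dualizing element: one whose negation `b ↦ b ⇒ z` is an involution. -/
def IsDualizing (z : L) : Prop := ∀ b : L, (b ⇒ z) ⇒ z = b

namespace IsDualizing

theorem le (hz : IsDualizing z) (a : L) : z ≤ a := by
  rw [← hz a, le_imp_iff]
  exact mul_le_left

theorem mul_neg (hz : IsDualizing z) (a : L) : a * (a ⇒ z) = z := by
  rw [mul_comm]
  exact le_antisymm imp_mul_le (hz.le _)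

theorem oplus_dualizing (hz : IsDualizing z) (a : L) : oplus z a z = a :=
  hz a

theorem oplus_comm (hz : IsDualizing z) (a b : L) : oplus z a b = oplus z b a :=
  calc oplus z a b = (a ⇒ z) ⇒ (b ⇒ z) ⇒ z := by rw [hz b, oplus]
    _ = (b ⇒ z) ⇒ (a ⇒ z) ⇒ z := by rw [← mul_imp, mul_comm, mul_imp]
    _ = oplus z b a := by rw [hz a, oplus]

end IsDualizing

theorem kimp_kone (X : L × L) : kimp X kone = X.swap := by
  simp only [kimp, kone, imp_one, one_imp, mul_one, inf_eq_right.mpr (le_one X.2), Prod.swap]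

theorem _root_.IsSubuniverse.swap_mem (hS : IsSubuniverse S) {X : L × L} (hX : X ∈ S) :
    X.swap ∈ S :=
  kimp_kone X ▸ (hS.2 X kone hX hS.1).2.2.2

theorem kmeet_eq_swap_kjoin (X Y : L × L) : kmeet X Y = (kjoin X.swap Y.swap).swap :=
  rfl

theorem kimp_eq_swap_kmul (X Y : L × L) : kimp X Y = (kmul X Y.swap).swap :=
  rfl

theorem isSubuniverse_of_swap_mem (one_mem : kone ∈ S) (swap_mem : ∀ X ∈ S, X.swap ∈ S)
    (kjoin_mem : ∀ X ∈ S, ∀ Y ∈ S, kjoin X Y ∈ S)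
    (kmul_mem : ∀ X ∈ S, ∀ Y ∈ S, kmul X Y ∈ S) : IsSubuniverse S := by
  refine ⟨one_mem, fun X Y hX hY => ⟨kjoin_mem X hX Y hY, ?_, kmul_mem X hX Y hY, ?_⟩⟩
  · rw [kmeet_eq_swap_kjoin]
    exact swap_mem _ (kjoin_mem _ (swap_mem X hX) _ (swap_mem Y hY))
  · rw [kimp_eq_swap_kmul]
    exact swap_mem _ (kmul_mem X hX _ (swap_mem Y hY))

/-- The set `K(L, F)` of pairs `(a, b)` with `a ⊕ b ∈ F`. -/
def pairsOfFilter (z : L) (F : Set L) : Set (L × L) := {p | oplus z p.1 p.2 ∈ F}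

/-- The set `F_S` of all `a ⊕ b` with `(a, b) ∈ S`. -/
def filterOfPairs (z : L) (S : Set (L × L)) : Set L := {x | ∃ p ∈ S, x = oplus z p.1 p.2}

theorem mem_pairsOfFilter {F : Set L} {p : L × L} :
    p ∈ pairsOfFilter z F ↔ oplus z p.1 p.2 ∈ F :=
  Iff.rfl

theorem _root_.IsLatticeFilter.one_mem {F : Set L} (hF : IsLatticeFilter F) : (1 : L) ∈ F :=
  let ⟨⟨f, hf⟩, mem_of_le, _⟩ := hF
  mem_of_le f 1 hf (le_one f)

theorem IsDualizing.isAdmissible_pairsOfFilter (hz : IsDualizing z) {F : Set L}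
    (hF : IsLatticeFilter F) : IsAdmissible (pairsOfFilter z F) := by
  have ⟨_, mem_of_le, inf_mem⟩ := hF
  have pair_one_mem (a : L) : (a, 1) ∈ pairsOfFilter z F := by
    rw [mem_pairsOfFilter, oplus_one]
    exact hF.one_mem
  refine ⟨isSubuniverse_of_swap_mem (pair_one_mem 1) (fun X hX => ?_) (fun X hX Y hY => ?_)
    (fun X hX Y hY => ?_), pair_one_mem⟩
  · rwa [mem_pairsOfFilter, hz.oplus_comm]
  · exact mem_of_le _ _ (inf_mem _ _ hX hY) (inf_oplus_le_oplus_kjoin X Y)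
  · exact mem_of_le _ _ (inf_mem _ _ hX hY) (inf_oplus_le_oplus_kmul X Y)

theorem IsDualizing.filterOfPairs_pairsOfFilter (hz : IsDualizing z) (F : Set L) :
    filterOfPairs z (pairsOfFilter z F) = F := by
  ext x
  constructor
  · rintro ⟨p, hp, rfl⟩
    exact hp
  · intro hx
    refine ⟨(x, z), ?_, (hz.oplus_dualizing x).symm⟩
    rwa [mem_pairsOfFilter, hz.oplus_dualizing]

theorem _root_.IsAdmissible.mem_of_fst_le (hS : IsAdmissible S) (hac : (a, c) ∈ S) (hab : a ≤ b) :
    (b, c) ∈ S := by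
  have kjoin_mem : kjoin (a, c) (b, 1) ∈ S := (hS.1.2 _ _ hac (hS.2 b)).1
  rwa [kjoin, sup_eq_right.mpr hab, inf_eq_left.mpr (le_one c)] at kjoin_mem

theorem _root_.IsAdmissible.mul_imp_mem (hS : IsAdmissible S) (hab : (a, b) ∈ S) (c : L) :
    (a * c, c ⇒ b) ∈ S := by
  have kmul_mem : kmul (a, b) (c, 1) ∈ S := (hS.1.2 _ _ hab (hS.2 c)).2.2.1
  rwa [kmul, imp_one, inf_eq_right.mpr (le_one _)] at kmul_mem

theorem IsDualizing.oplus_pair_mem_iff (hz : IsDualizing z) (hS : IsAdmissible S) :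
    (oplus z a b, z) ∈ S ↔ (a, b) ∈ S := by
  constructor
  · intro h
    have mul_mem : (oplus z a b * (a ⇒ z), a) ∈ S := by
      simpa only [hz a] using hS.mul_imp_mem h (a ⇒ z)
    exact hS.1.swap_mem (hS.mem_of_fst_le mul_mem imp_mul_le)
  · intro h
    have mul_mem : (z, oplus z a b) ∈ S := by
      simpa only [hz.mul_neg, oplus] using hS.mul_imp_mem h (a ⇒ z)
    exact hS.1.swap_mem mul_mem

theorem IsDualizing.mem_filterOfPairs_iff (hz : IsDualizing z) (hS : IsAdmissible S) :
    c ∈ filterOfPairs z S ↔ (c, z) ∈ S := by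
  constructor
  · rintro ⟨p, hp, rfl⟩
    exact (hz.oplus_pair_mem_iff hS).mpr hp
  · intro hc
    exact ⟨(c, z), hc, (hz.oplus_dualizing c).symm⟩

theorem IsDualizing.isLatticeFilter_filterOfPairs (hz : IsDualizing z) (hS : IsAdmissible S) :
    IsLatticeFilter (filterOfPairs z S) := by
  refine ⟨⟨_, kone, hS.1.1, rfl⟩, fun a b ha hab => ?_, fun a b ha hb => ?_⟩
  · rw [hz.mem_filterOfPairs_iff hS] at ha ⊢
    exact hS.mem_of_fst_le ha hab
  · rw [hz.mem_filterOfPairs_iff hS] at ha hb ⊢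
    simpa only [kmeet, sup_idem] using (hS.1.2 _ _ ha hb).2.1

theorem IsDualizing.pairsOfFilter_filterOfPairs (hz : IsDualizing z) (hS : IsAdmissible S) :
    pairsOfFilter z (filterOfPairs z S) = S :=
  Set.ext fun _ => (hz.mem_filterOfPairs_iff hS).trans (hz.oplus_pair_mem_iff hS)

end CIRL

/-- For an involutive CIRL `L` with least element `0`, the maps
`F ↦ K(L,F) = {(a,b) : a ⊕ b ∈ F}` and `S ↦ F_S = {a ⊕ b : (a,b) ∈ S}` are
mutually inverse bijections between lattice filters of `L` and admissible
subuniverses of `K(L)`. -/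
theorem stmt10 {L : Type*} [CIRL L] (z : L) (hz : ∀ a : L, z ≤ a)
    (hinv : ∀ b : L, CIRL.imp (CIRL.imp b z) z = b) :
    let oplus : L → L → L := fun a b => CIRL.imp (CIRL.imp a z) b
    let KF : Set L → Set (L × L) := fun F => {p | oplus p.1 p.2 ∈ F}
    let FS : Set (L × L) → Set L := fun S => {x | ∃ p ∈ S, x = oplus p.1 p.2}
    (∀ F : Set L, IsLatticeFilter F → IsAdmissible (KF F) ∧ FS (KF F) = F) ∧
    (∀ S : Set (L × L), IsAdmissible S →
      IsLatticeFilter (FS S) ∧ KF (FS S) = S) := by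
  intro oplus KF FS
  have dualizing : IsDualizing z := hinv
  refine ⟨fun F hF => ⟨?_, ?_⟩, fun S hS => ⟨?_, ?_⟩⟩
  · exact dualizing.isAdmissible_pairsOfFilter hF
  · exact dualizing.filterOfPairs_pairsOfFilter F
  · exact dualizing.isLatticeFilter_filterOfPairs hS
  · exact dualizing.pairsOfFilter_filterOfPairs hS
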